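/- arXiv:2503.02477 — 6 statements merged into one kernel-verified Lean document; each statement's English description precedes it below -/
import Mathlib

section
/- Let U be a real k×m matrix and V a real k×n matrix with U·Uᵀ = I_k and V·Vᵀ = I_k. Then the (m+n)×(m+n) block matrix with blocks [[I_m, Uᵀ·V], [Vᵀ·U, I_n]] is positive semidefinite. -/
open Matrix

/-!
The Gram matrix of the columns of `U` and `V` has the blocks `Uᵀ * U`, `Uᵀ * V`, `Vᵀ * U`,
`Vᵀ * V`, so it differs from the matrix in question only by the block diagonal matrix with blocks
`1 - Uᵀ * U` and `1 - Vᵀ * V`. As `U` and `V` are co-isometries, these two blocks are orthogonal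
projections.
-/

section RelativeProduct

variable {k m n R : Type*} [Ring R] [PartialOrder R] [StarRing R]

theorem isStarProjection_conjTranspose_mul_self {α : Type*} [Semiring α] [StarRing α]
    [Fintype k] [DecidableEq k] [Fintype n] {V : Matrix k n α} (hV : V * Vᴴ = 1) :
    IsStarProjection (Vᴴ * V) where
  isIdempotentElem := by
    rw [IsIdempotentElem, Matrix.mul_assoc, ← Matrix.mul_assoc V, hV, Matrix.one_mul]
  isSelfAdjoint := isHermitian_conjTranspose_mul_self V

theorem posSemidef_fromBlocks_zero_zero [AddLeftMono R] [Finite m] [Finite n]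
    {A : Matrix m m R} {D : Matrix n n R} (hA : A.PosSemidef) (hD : D.PosSemidef) :
    (fromBlocks A 0 0 D).PosSemidef := by
  have := Fintype.ofFinite m
  have := Fintype.ofFinite n
  have hermitian : (fromBlocks A 0 0 D).IsHermitian :=
    hA.isHermitian.fromBlocks conjTranspose_zero hD.isHermitian
  refine .of_dotProduct_mulVec_nonneg hermitian fun x ↦ ?_
  obtain ⟨y, z, rfl⟩ : ∃ y z, x = Sum.elim y z := ⟨_, _, (Sum.elim_comp_inl_inr x).symm⟩
  simpa [fromBlocks_mulVec, Function.star_sumElim] using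
    add_nonneg (hA.dotProduct_mulVec_nonneg y) (hD.dotProduct_mulVec_nonneg z)

variable [StarOrderedRing R]

theorem posSemidef_of_isStarProjection [Fintype n] {P : Matrix n n R} (hP : IsStarProjection P) :
    P.PosSemidef := by
  have gram : Pᴴ * P = P := by
    rw [← star_eq_conjTranspose, hP.isSelfAdjoint.star_eq, hP.isIdempotentElem.eq]
  exact gram ▸ posSemidef_conjTranspose_mul_self P

theorem posSemidef_one_sub_conjTranspose_mul_self [Fintype k] [DecidableEq k] [Fintype n]
    [DecidableEq n] {V : Matrix k n R} (hV : V * Vᴴ = 1) : (1 - Vᴴ * V).PosSemidef :=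
  posSemidef_of_isStarProjection (isStarProjection_conjTranspose_mul_self hV).one_sub

theorem posSemidef_fromBlocks_conjTranspose_mul [Fintype k] [Finite m] [Finite n]
    (U : Matrix k m R) (V : Matrix k n R) :
    (fromBlocks (Uᴴ * U) (Uᴴ * V) (Vᴴ * U) (Vᴴ * V)).PosSemidef := by
  rw [← fromRows_mul_fromCols, ← conjTranspose_fromCols_eq_fromRows_conjTranspose]
  exact posSemidef_conjTranspose_mul_self (fromCols U V)

theorem stmt_4_general [Fintype k] [Finite m] [Finite n] {A : Matrix m m R} {D : Matrix n n R}
    {U : Matrix k m R} {V : Matrix k n R} (hU : (A - Uᴴ * U).PosSemidef)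
    (hV : (D - Vᴴ * V).PosSemidef) :
    (fromBlocks A (Uᴴ * V) (Vᴴ * U) D).PosSemidef := by
  have gram_add_defect : fromBlocks A (Uᴴ * V) (Vᴴ * U) D =
      fromBlocks (Uᴴ * U) (Uᴴ * V) (Vᴴ * U) (Vᴴ * V) +
        fromBlocks (A - Uᴴ * U) 0 0 (D - Vᴴ * V) := by
    simp only [fromBlocks_add, add_sub_cancel, add_zero]
  rw [gram_add_defect]
  exact (posSemidef_fromBlocks_conjTranspose_mul U V).add (posSemidef_fromBlocks_zero_zero hU hV)

end RelativeProduct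

/-- If U (k×m) and V (k×n) are co-isometries (U·Uᵀ = I, V·Vᵀ = I),
then the block matrix [[I_m, Uᵀ·V], [Vᵀ·U, I_n]] is positive semidefinite. -/
theorem stmt_4 (k m n : ℕ) (U : Matrix (Fin k) (Fin m) ℝ) (V : Matrix (Fin k) (Fin n) ℝ)
    (hU : U * Uᵀ = 1) (hV : V * Vᵀ = 1) :
    (Matrix.fromBlocks (1 : Matrix (Fin m) (Fin m) ℝ) (Uᵀ * V) (Vᵀ * U)
        (1 : Matrix (Fin n) (Fin n) ℝ)).PosSemidef := by
  simp only [← conjTranspose_eq_transpose_of_trivial] at hU hV ⊢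
  exact stmt_4_general (posSemidef_one_sub_conjTranspose_mul_self hU)
    (posSemidef_one_sub_conjTranspose_mul_self hV)
end

section
/- Let F (m×w), G (n×w), U (k×m), V (k×n), I' (w'×m), J (w'×n) be real matrices satisfying: F·Fᵀ = I_m, G·Gᵀ = I_n, U·Uᵀ = I_k, V·Vᵀ = I_k, I'·I'ᵀ = I_{w'}, J·Jᵀ = I_{w'} (all six are co-isometries); the square commutes: U·F = V·G; the square is independent: G·Fᵀ = Vᵀ·U; and the outer maps commute: I'·F = J·G. Then the matrix K := I'·Uᵀ satisfies K = J·Vᵀ, K·U = I', K·V = J, and K·Kᵀ = I_{w'}; moreover K is the unique real w'×k matrix satisfying K·U = I' and K·V = J. -/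
open Matrix

/-!
Multiplying `I * F = J * G` on the right by `Fᴴ` and rewriting `G * Fᴴ` as `Vᴴ * U` shows that `I`
factors through `U` as `(J * Vᴴ) * U`; exchanging the two legs, `J` factors through `V` as
`(I * Uᴴ) * V`. A factorization through the co-isometry `U` is unique and is found by multiplying
with `Uᴴ`, so the two candidate mediating maps `J * Vᴴ` and `I * Uᴴ` agree.
-/

section

variable {R l m n k w : Type*} [Semiring R] [StarRing R]

/-- A co-isometry, that is, a matrix with a right inverse given by its adjoint. Over `ℝ` the adjoint
is the transpose, and these are the morphisms of the category `CoIsom`. -/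
def IsCoisometry [DecidableEq m] [Fintype n] (A : Matrix m n R) : Prop :=
  A * Aᴴ = 1

/-- The independence condition on a square `U * F = V * G` of co-isometries;
commutativity of the square is not part of it. -/
def IsIndependent [Fintype k] [Fintype w] (F : Matrix m w R) (G : Matrix n w R)
    (U : Matrix k m R) (V : Matrix k n R) : Prop :=
  G * Fᴴ = Vᴴ * U

theorem IsIndependent.symm [Fintype k] [Fintype w] {F : Matrix m w R} {G : Matrix n w R}
    {U : Matrix k m R} {V : Matrix k n R} (h : IsIndependent F G U V) :
    IsIndependent G F V U := by
  simpa only [IsIndependent, conjTranspose_mul, conjTranspose_conjTranspose] using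
    congrArg conjTranspose h

namespace IsCoisometry

theorem mul_mul_conjTranspose_cancel [Fintype m] [DecidableEq m] [Fintype n] {A : Matrix m n R}
    (hA : IsCoisometry A) (B : Matrix l m R) : B * A * Aᴴ = B := by
  rw [Matrix.mul_assoc, hA, Matrix.mul_one]

theorem eq_mul_conjTranspose_of_mul_eq [Fintype m] [DecidableEq m] [Fintype n] {A : Matrix m n R}
    (hA : IsCoisometry A) {B : Matrix l m R} {C : Matrix l n R} (h : B * A = C) : B = C * Aᴴ := by
  rw [← h, hA.mul_mul_conjTranspose_cancel]

theorem mul_right_iff [DecidableEq l] [Fintype m] [DecidableEq m] [Fintype n] {A : Matrix m n R}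
    (hA : IsCoisometry A) {B : Matrix l m R} : IsCoisometry (B * A) ↔ IsCoisometry B := by
  rw [IsCoisometry, conjTranspose_mul, ← Matrix.mul_assoc, hA.mul_mul_conjTranspose_cancel,
    IsCoisometry]

end IsCoisometry

variable [Fintype m] [DecidableEq m] [Fintype n] [Fintype k] [Fintype w]
  {F : Matrix m w R} {G : Matrix n w R} {U : Matrix k m R} {V : Matrix k n R}
  {I : Matrix l m R} {J : Matrix l n R}

theorem IsIndependent.mul_conjTranspose_mul_eq (h : IsIndependent F G U V) (hF : IsCoisometry F)
    (houter : I * F = J * G) : J * Vᴴ * U = I :=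
  calc
    J * Vᴴ * U = J * (G * Fᴴ) := by rw [Matrix.mul_assoc, h]
    _ = I * F * Fᴴ := by rw [← Matrix.mul_assoc, houter]
    _ = I := hF.mul_mul_conjTranspose_cancel I

theorem stmt_6_general [DecidableEq l] [DecidableEq n] [DecidableEq k]
    (hF : IsCoisometry F) (hG : IsCoisometry G) (hU : IsCoisometry U) (hI : IsCoisometry I)
    (hindep : IsIndependent F G U V) (houter : I * F = J * G) :
    (I * Uᴴ = J * Vᴴ ∧ (I * Uᴴ) * U = I ∧ (I * Uᴴ) * V = J ∧ IsCoisometry (I * Uᴴ)) ∧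
      ∀ K : Matrix l k R, K * U = I → K = I * Uᴴ := by
  have factor_U : J * Vᴴ * U = I := hindep.mul_conjTranspose_mul_eq hF houter
  have factor_V : I * Uᴴ * V = J := hindep.symm.mul_conjTranspose_mul_eq hG houter.symm
  have agree : J * Vᴴ = I * Uᴴ := hU.eq_mul_conjTranspose_of_mul_eq factor_U
  have mediates : I * Uᴴ * U = I := agree ▸ factor_U
  exact ⟨⟨agree.symm, mediates, factor_V, hU.mul_right_iff.mp (mediates.symm ▸ hI)⟩,
    fun _ hK ↦ hU.eq_mul_conjTranspose_of_mul_eq hK⟩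

end

/-- Independent squares of co-isometries are pushouts, with mediating
map K = I'·Uᵀ = J·Vᵀ given by transposition (Bayesian inversion). -/
theorem stmt_6 (m n k w w' : ℕ)
    (F : Matrix (Fin m) (Fin w) ℝ) (G : Matrix (Fin n) (Fin w) ℝ)
    (U : Matrix (Fin k) (Fin m) ℝ) (V : Matrix (Fin k) (Fin n) ℝ)
    (I' : Matrix (Fin w') (Fin m) ℝ) (J : Matrix (Fin w') (Fin n) ℝ)
    (hF : F * Fᵀ = 1) (hG : G * Gᵀ = 1) (hU : U * Uᵀ = 1) (hV : V * Vᵀ = 1)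
    (hI' : I' * I'ᵀ = 1) (hJ : J * Jᵀ = 1)
    (hcomm : U * F = V * G) (hindep : G * Fᵀ = Vᵀ * U) (houter : I' * F = J * G) :
    (I' * Uᵀ = J * Vᵀ ∧ (I' * Uᵀ) * U = I' ∧ (I' * Uᵀ) * V = J ∧
        (I' * Uᵀ) * (I' * Uᵀ)ᵀ = 1) ∧
      ∀ K : Matrix (Fin w') (Fin k) ℝ, K * U = I' → K * V = J → K = I' * Uᵀ := by
  simp only [← conjTranspose_eq_transpose_of_trivial] at hF hG hU hI' hindep ⊢
  obtain ⟨hK, unique⟩ := stmt_6_general (V := V) hF hG hU hI' hindep houter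
  exact ⟨hK, fun K hKU _ ↦ unique K hKU⟩
end

section
/- Let f : Ω → X, g : Ω → Y, u : X → Z, v : Y → Z be functions with u∘f = v∘g, with u and v surjective, and suppose the square is independent: for all x ∈ X, y ∈ Y with u x = v y there exists ω ∈ Ω with f ω = x and g ω = y. Then for every set W and all functions i : X → W, j : Y → W with i∘f = j∘g, there exists a unique function k : Z → W with k∘u = i and k∘v = j. -/
/-!
If `u x = v y`, independence gives a point of `Ω` over `(x, y)`, so `i ∘ f = j ∘ g` forces
`i x = j y`. Two points of a fibre of `u` share a common partner `y`, because `v` is surjective,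
so `i` takes the value `j y` at both and therefore descends along `u`.
-/

open Function

section Descent

variable {X Y Z W : Sort*} {u : X → Z} {v : Y → Z} {i : X → W} {j : Y → W}

theorem existsUnique_comp_eq_of_factorsThrough (hu : Surjective u) (hi : i.FactorsThrough u) :
    ∃! k : Z → W, k ∘ u = i := by
  have hcomp : (i ∘ surjInv hu) ∘ u = i := by
    funext x
    exact hi (surjInv_eq hu (u x))
  exact ⟨i ∘ surjInv hu, hcomp, fun k hk ↦ hu.injective_comp_right (hk.trans hcomp.symm)⟩

theorem factorsThrough_of_forall_eq_imp_eq (huv : ∀ x, ∃ y, u x = v y)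
    (hij : ∀ x y, u x = v y → i x = j y) : i.FactorsThrough u := by
  intro x x' hx
  obtain ⟨y, hy⟩ := huv x'
  calc
    i x = j y := hij x y (hx.trans hy)
    _ = i x' := (hij x' y hy).symm

theorem existsUnique_comp_eq_and_comp_eq_of_forall_eq_imp_eq (hu : Surjective u)
    (hv : Surjective v) (hij : ∀ x y, u x = v y → i x = j y) :
    ∃! k : Z → W, k ∘ u = i ∧ k ∘ v = j := by
  have hi : i.FactorsThrough u :=
    factorsThrough_of_forall_eq_imp_eq (fun x ↦ (hv (u x)).imp fun _ ↦ Eq.symm) hij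
  obtain ⟨k, hku, hk_unique⟩ := existsUnique_comp_eq_of_factorsThrough hu hi
  have hkv : k ∘ v = j := by
    funext y
    obtain ⟨x, hx⟩ := hu (v y)
    calc
      k (v y) = k (u x) := by rw [hx]
      _ = i x := congrFun hku x
      _ = j y := hij x y hx
  exact ⟨k, ⟨hku, hkv⟩, fun k' hk' ↦ hk_unique k' hk'.1⟩

end Descent

theorem stmt_9_general {Ω X Y Z W : Sort*} {f : Ω → X} {g : Ω → Y} {u : X → Z} {v : Y → Z}
    (hu : Surjective u) (hv : Surjective v)
    (hindep : ∀ x y, u x = v y → ∃ ω, f ω = x ∧ g ω = y)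
    {i : X → W} {j : Y → W} (hij : i ∘ f = j ∘ g) :
    ∃! k : Z → W, k ∘ u = i ∧ k ∘ v = j := by
  refine existsUnique_comp_eq_and_comp_eq_of_forall_eq_imp_eq hu hv fun x y hxy ↦ ?_
  obtain ⟨ω, rfl, rfl⟩ := hindep x y hxy
  exact congrFun hij ω

/-- Independent squares of surjections are pushouts of sets. -/
theorem stmt_9 {Ω X Y Z : Type*} (f : Ω → X) (g : Ω → Y) (u : X → Z) (v : Y → Z)
    (hcomm : u ∘ f = v ∘ g) (hu : Function.Surjective u) (hv : Function.Surjective v)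
    (hindep : ∀ x y, u x = v y → ∃ ω, f ω = x ∧ g ω = y) :
    ∀ (W : Type*) (i : X → W) (j : Y → W), i ∘ f = j ∘ g →
      ∃! k : Z → W, k ∘ u = i ∧ k ∘ v = j :=
  fun _ _ _ hij ↦ stmt_9_general hu hv hindep hij
end

section
/- Let f₁ : Ω → X₁, f₂ : Ω → X₂, g₁ : X₁ → Y₂, g₂ : X₂ → Y₂, h₁ : X₁ → Y₁, h₂ : Y₂ → Z, k : Y₁ → Z be functions with g₁∘f₁ = g₂∘f₂ and k∘h₁ = h₂∘g₁. Suppose the composite square (AB) is independent: for all y₁ ∈ Y₁, x₂ ∈ X₂ with k y₁ = h₂ (g₂ x₂) there exists ω ∈ Ω with h₁ (f₁ ω) = y₁ and f₂ ω = x₂; and suppose square (B) is an independent pullback: for all y₁ ∈ Y₁, y₂ ∈ Y₂ with k y₁ = h₂ y₂ there exists a unique x₁ ∈ X₁ with h₁ x₁ = y₁ and g₁ x₁ = y₂. Then square (A) is independent: for all x₁ ∈ X₁, x₂ ∈ X₂ with g₁ x₁ = g₂ x₂ there exists ω ∈ Ω with f₁ ω = x₁ and f₂ ω = x₂. -/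
section

variable {Ω X Y Z X₁ X₂ Y₁ Y₂ : Type*}

/-- Independence of a square in `Surj`: the comparison map `ω ↦ (f ω, g ω)` covers the fibre product
of `u` and `v`. The commutation `u ∘ f = v ∘ g` is kept as a separate hypothesis, so that a
commuting composite need not be assumed where it follows from its two squares. -/
def IsIndependentSquare (f : Ω → X) (g : Ω → Y) (u : X → Z) (v : Y → Z) : Prop :=
  ∀ x y, u x = v y → ∃ ω, f ω = x ∧ g ω = y

theorem injective_prodMk_of_existsUnique {f : Ω → X} {g : Ω → Y} {u : X → Z} {v : Y → Z}
    (comm : u ∘ f = v ∘ g) (pullback : ∀ x y, u x = v y → ∃! ω, f ω = x ∧ g ω = y) :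
    Function.Injective fun ω ↦ (f ω, g ω) := fun _ ω' h ↦
  (pullback (f ω') (g ω') (congrFun comm ω')).unique (Prod.mk.inj h) ⟨rfl, rfl⟩

theorem stmt_11_general {f₁ : Ω → X₁} {f₂ : Ω → X₂} {g₁ : X₁ → Y₂} {g₂ : X₂ → Y₂}
    {h₁ : X₁ → Y₁} {h₂ : Y₂ → Z} {k : Y₁ → Z}
    (commA : g₁ ∘ f₁ = g₂ ∘ f₂) (commB : k ∘ h₁ = h₂ ∘ g₁)
    (indepAB : IsIndependentSquare (h₁ ∘ f₁) f₂ k (h₂ ∘ g₂))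
    (injB : Function.Injective fun x₁ ↦ (h₁ x₁, g₁ x₁)) :
    IsIndependentSquare f₁ f₂ g₁ g₂ := by
  intro x₁ x₂ hx
  have outer_eq : k (h₁ x₁) = h₂ (g₂ x₂) := (congrFun commB x₁).trans (congrArg h₂ hx)
  obtain ⟨ω, hω₁, hω₂⟩ := indepAB (h₁ x₁) x₂ outer_eq
  have g₁_eq : g₁ (f₁ ω) = g₁ x₁ :=
    calc
      g₁ (f₁ ω) = g₂ (f₂ ω) := congrFun commA ω
      _ = g₂ x₂ := congrArg g₂ hω₂
      _ = g₁ x₁ := hx.symm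
  exact ⟨ω, injB (Prod.ext hω₁ g₁_eq), hω₂⟩

end

/-- (IP4 in Surj) If the composite rectangle (AB) is independent and
(B) is an independent pullback, then (A) is independent. -/
theorem stmt_11 {Ω X₁ X₂ Y₁ Y₂ Z : Type*}
    (f₁ : Ω → X₁) (f₂ : Ω → X₂) (g₁ : X₁ → Y₂) (g₂ : X₂ → Y₂)
    (h₁ : X₁ → Y₁) (h₂ : Y₂ → Z) (k : Y₁ → Z)
    (hA : g₁ ∘ f₁ = g₂ ∘ f₂) (hB : k ∘ h₁ = h₂ ∘ g₁)
    (hABindep : ∀ y₁ x₂, k y₁ = h₂ (g₂ x₂) → ∃ ω, h₁ (f₁ ω) = y₁ ∧ f₂ ω = x₂)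
    (hBpb : ∀ y₁ y₂, k y₁ = h₂ y₂ → ∃! x₁, h₁ x₁ = y₁ ∧ g₁ x₁ = y₂) :
    ∀ x₁ x₂, g₁ x₁ = g₂ x₂ → ∃ ω, f₁ ω = x₁ ∧ f₂ ω = x₂ :=
  stmt_11_general hA hB hABindep (injective_prodMk_of_existsUnique hB hBpb)
end

section
/- Let X, A, Y be finite types, and let N : X → A → ℝ and M : Y → X → ℝ be stochastic matrices: all entries are nonnegative, Σ_x N x a = 1 for all a, and Σ_y M y x = 1 for all x. Suppose (i) for every x ∈ X there exists a ∈ A with 0 < N x a (the support of N covers X), and (ii) the composite M·N is deterministic: for every a ∈ A there exists y ∈ Y with Σ_x (M y x) · (N x a) = 1. Then M is deterministic: for every x ∈ X there exists y ∈ Y with M y x = 1. -/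
section

variable {R : Type*} [Ring R] [PartialOrder R] [IsStrictOrderedRing R]
  [TopologicalSpace R] [IsTopologicalAddGroup R] [OrderClosedTopology R]

theorem eq_one_of_hasSum_mul_of_le_one {ι : Type*} {f w : ι → R} {s : R} {i : ι}
    (hf : ∀ j, f j ≤ 1) (hw : ∀ j, 0 ≤ w j) (hsum : HasSum w s)
    (hmul : HasSum (fun j => f j * w j) s) (hi : 0 < w i) : f i = 1 := by
  have mul_le (j : ι) : f j * w j ≤ w j := mul_le_of_le_one_left (hw j) (hf j)
  by_contra hne
  have mul_lt : f i * w i < w i := mul_lt_of_lt_one_left hi (lt_of_le_of_ne (hf i) hne)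
  exact lt_irrefl s (hasSum_lt mul_le mul_lt hmul hsum)

theorem stmt_15_general {X A Y : Type*} (N : X → A → R) (M : Y → X → R)
    (hN0 : ∀ x a, 0 ≤ N x a) (hM0 : ∀ y x, 0 ≤ M y x)
    (hN1 : ∀ a, HasSum (fun x => N x a) 1) (hM1 : ∀ x, HasSum (fun y => M y x) 1)
    (hsupp : ∀ x, ∃ a, 0 < N x a)
    (hdet : ∀ a, ∃ y, HasSum (fun x => M y x * N x a) 1) :
    ∀ x, ∃ y, M y x = 1 := by
  intro x
  obtain ⟨a, ha⟩ := hsupp x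
  obtain ⟨y, hy⟩ := hdet a
  have M_le_one (x' : X) : M y x' ≤ 1 := le_hasSum (hM1 x') y fun y' _ => hM0 y' x'
  exact ⟨y, eq_one_of_hasSum_mul_of_le_one M_le_one (hN0 · a) (hN1 a) hy ha⟩

end

/-- In FinStoch, if the composite M·N of stochastic matrices is
deterministic and the support of N covers X, then M is deterministic. -/
theorem stmt_15 {X A Y : Type*} [Fintype X] [Fintype A] [Fintype Y]
    (N : X → A → ℝ) (M : Y → X → ℝ)
    (hN0 : ∀ x a, 0 ≤ N x a) (hM0 : ∀ y x, 0 ≤ M y x)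
    (hN1 : ∀ a, ∑ x, N x a = 1) (hM1 : ∀ x, ∑ y, M y x = 1)
    (hsupp : ∀ x, ∃ a, 0 < N x a)
    (hdet : ∀ a, ∃ y, ∑ x, M y x * N x a = 1) :
    ∀ x, ∃ y, M y x = 1 := by
  choose y hy using hdet
  exact stmt_15_general N M hN0 hM0 (fun a => hN1 a ▸ hasSum_fintype _)
    (fun x => hM1 x ▸ hasSum_fintype _) hsupp (fun a => ⟨y a, hy a ▸ hasSum_fintype _⟩)
end

section
/- Let X and Y be types with x₀ ∈ X, and let p, q be probability mass functions on X × Y. If the first marginals satisfy p.map Prod.fst = PMF.pure x₀ and q.map Prod.fst = PMF.pure x₀, and the second marginals agree, p.map Prod.snd = q.map Prod.snd, then p = q. -/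
section Map

variable {α β : Type*}

theorem pmf_map_apply_of_injOn {f : α → β} {s : Set α} (hf : s.InjOn f) {p : PMF α}
    (hp : p.support ⊆ s) {a : α} (ha : a ∈ s) : p.map f (f a) = p a := by
  have fiber_inter_support : f ⁻¹' {f a} ∩ p.support = {a} ∩ p.support := by
    ext a'
    refine and_congr_left fun ha' => ?_
    exact hf.eq_iff (hp ha') ha
  calc p.map f (f a) = p.toOuterMeasure (f ⁻¹' {f a}) := by
        rw [← PMF.toOuterMeasure_apply_singleton, PMF.toOuterMeasure_map_apply]
    _ = p.toOuterMeasure {a} :=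
        p.toOuterMeasure_apply_eq_of_inter_support_eq fiber_inter_support
    _ = p a := p.toOuterMeasure_apply_singleton a

theorem pmf_map_injOn_support_subset {f : α → β} {s : Set α} (hf : s.InjOn f) :
    {p : PMF α | p.support ⊆ s}.InjOn (PMF.map f) := by
  intro p hp q hq hpq
  ext a
  by_cases ha : a ∈ s
  · rw [← pmf_map_apply_of_injOn hf hp ha, hpq, pmf_map_apply_of_injOn hf hq ha]
  · rw [(p.apply_eq_zero_iff a).2 (mt (@hp a) ha), (q.apply_eq_zero_iff a).2 (mt (@hq a) ha)]

theorem pmf_support_subset_preimage_of_map_eq_pure {f : α → β} {b : β} {p : PMF α}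
    (hp : p.map f = PMF.pure b) : p.support ⊆ f ⁻¹' {b} := by
  rw [← Set.image_subset_iff, ← PMF.support_map, hp, PMF.support_pure]

end Map

theorem snd_injOn_fst_preimage_singleton {X Y : Type*} (x : X) :
    (Prod.fst ⁻¹' {x} : Set (X × Y)).InjOn Prod.snd :=
  fun _ hz _ hw hsnd => Prod.ext (hz.trans hw.symm) hsnd

/-- Two probability mass functions on X × Y whose first marginals are
the same Dirac point mass and whose second marginals agree are equal. -/
theorem stmt_16 {X Y : Type*} (x₀ : X) (p q : PMF (X × Y))
    (hp : p.map Prod.fst = PMF.pure x₀) (hq : q.map Prod.fst = PMF.pure x₀)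
    (hsnd : p.map Prod.snd = q.map Prod.snd) :
    p = q :=
  pmf_map_injOn_support_subset (snd_injOn_fst_preimage_singleton x₀)
    (pmf_support_subset_preimage_of_map_eq_pure hp)
    (pmf_support_subset_preimage_of_map_eq_pure hq) hsnd
end
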